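/- arXiv:2405.19239 — 3 statements merged into one kernel-verified Lean document; each statement's English description precedes it below -/
import Mathlib

section
/- Let m, n : ℕ with 1 ≤ m < n, and let y ∈ ℂ⟦T⟧ be a formal power series with ord y = n. Set x := T^m. Then ord((Dx)·(D²y) − (D²x)·(Dy)) = m + n − 3 (as elements of ℕ∞; note m + n − 3 ≥ 0 since m ≥ 1 and n ≥ 2). -/
open PowerSeries

/-- The formal derivative on `ℂ⟦T⟧`. -/
noncomputable def D : PowerSeries ℂ → PowerSeries ℂ := fun f => PowerSeries.derivative ℂ f

/-!
The Wronskian `W(f, g) = f g' - f' g` satisfies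
`X * W(X ^ a * u, X ^ b * v) = X ^ (a + b) * ((b - a) * (u * v) + X * W(u, v))`.
If `u` and `v` have nonzero constant coefficients and `a ≠ b`, then so does the last factor in
characteristic zero, whence `ord W(f, g) = a + b - 1` for series `f`, `g` of orders `a ≠ b`.
The inflection series of `x` and `y` is `W(x', y')`, and differentiation lowers a positive order
by one.
-/

section CommSemiring

variable {R : Type*} [CommSemiring R]

theorem order_derivative_of_order_eq_succ [IsAddTorsionFree R] {f : R⟦X⟧} {n : ℕ}
    (hf : f.order = (n + 1 : ℕ)) : (d⁄dX R f).order = n := by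
  obtain ⟨hlead, hlow⟩ := order_eq_nat.mp hf
  have hcoeff (i : ℕ) : coeff i (d⁄dX R f) = (i + 1) • coeff (i + 1) f := by
    rw [coeff_derivative, nsmul_eq_mul, mul_comm, Nat.cast_succ]
  refine order_eq_nat.mpr ⟨?_, fun i hi ↦ ?_⟩
  · rw [hcoeff]
    exact smul_ne_zero n.succ_ne_zero hlead
  · rw [hcoeff, hlow _ (Nat.succ_lt_succ hi), smul_zero]

theorem X_mul_derivative_X_pow_mul (a : ℕ) (u : R⟦X⟧) :
    X * d⁄dX R (X ^ a * u) = X ^ a * ((a : R⟦X⟧) * u + X * d⁄dX R u) := by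
  cases a with
  | zero => simp
  | succ a =>
    simp only [Derivation.leibniz, derivative_pow, derivative_X, smul_eq_mul,
      Nat.add_sub_cancel]
    ring

end CommSemiring

section CommRing

variable {R : Type*} [CommRing R]

/-- The Wronskian `f g' - f' g` of two formal power series, with the sign convention of
`Polynomial.wronskian`. The inflection series of `x` and `y` is the Wronskian of their
derivatives. -/
noncomputable def wronskian (f g : R⟦X⟧) : R⟦X⟧ := f * d⁄dX R g - d⁄dX R f * g

theorem X_mul_wronskian_X_pow_mul_X_pow_mul (a b : ℕ) (u v : R⟦X⟧) :
    X * wronskian (X ^ a * u) (X ^ b * v)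
      = X ^ (a + b) * ((b - a : R⟦X⟧) * (u * v) + X * wronskian u v) := by
  calc X * wronskian (X ^ a * u) (X ^ b * v)
    _ = X ^ a * u * (X * d⁄dX R (X ^ b * v)) - X * d⁄dX R (X ^ a * u) * (X ^ b * v) := by
      rw [wronskian]
      ring
    _ = X ^ (a + b) * ((b - a : R⟦X⟧) * (u * v) + X * wronskian u v) := by
      rw [X_mul_derivative_X_pow_mul, X_mul_derivative_X_pow_mul, wronskian]
      ring

variable [NoZeroDivisors R] [CharZero R]

theorem order_wronskian_X_pow_mul_X_pow_mul_add_one {a b : ℕ} (hab : a ≠ b) {u v : R⟦X⟧}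
    (hu : constantCoeff u ≠ 0) (hv : constantCoeff v ≠ 0) :
    (wronskian (X ^ a * u) (X ^ b * v)).order + 1 = (a + b : ℕ) := by
  have hba : (b : R) - a ≠ 0 := sub_ne_zero.mpr (Nat.cast_injective.ne hab.symm)
  have hcofactor : ((b - a : R⟦X⟧) * (u * v) + X * wronskian u v).order = 0 := by
    rw [← not_ne_iff, order_ne_zero_iff_constCoeff_eq_zero]
    simp [hba, hu, hv]
  calc (wronskian (X ^ a * u) (X ^ b * v)).order + 1
    _ = (X * wronskian (X ^ a * u) (X ^ b * v)).order := by rw [order_mul, order_X, add_comm]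
    _ = (a + b : ℕ) := by
      rw [X_mul_wronskian_X_pow_mul_X_pow_mul, order_mul, order_X_pow, hcofactor, add_zero]

theorem order_wronskian_add_one {f g : R⟦X⟧} (hfg : f.order ≠ g.order) :
    (wronskian f g).order + 1 = f.order + g.order := by
  rcases eq_or_ne f 0 with rfl | hf
  · simp [wronskian]
  rcases eq_or_ne g 0 with rfl | hg
  · simp [wronskian]
  have hne : f.order.toNat ≠ g.order.toNat := fun h ↦
    hfg (by rw [← coe_toNat_order hf, ← coe_toNat_order hg, h])
  have horder := order_wronskian_X_pow_mul_X_pow_mul_add_one hne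
    (constantCoeff_divXPowOrder_eq_zero_iff.not.mpr hf)
    (constantCoeff_divXPowOrder_eq_zero_iff.not.mpr hg)
  rwa [X_pow_order_mul_divXPowOrder, X_pow_order_mul_divXPowOrder, Nat.cast_add,
    coe_toNat_order hf, coe_toNat_order hg] at horder

theorem order_inflection_series_general {m n : ℕ} (hm : m ≠ 0) (hn : n ≠ 0) (hmn : m ≠ n)
    {x y : R⟦X⟧} (hx : x.order = m) (hy : y.order = n) :
    (d⁄dX R x * d⁄dX R (d⁄dX R y) - d⁄dX R (d⁄dX R x) * d⁄dX R y).order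
      = (m + n - 3 : ℕ) := by
  obtain ⟨a, rfl⟩ := Nat.exists_eq_succ_of_ne_zero hm
  obtain ⟨b, rfl⟩ := Nat.exists_eq_succ_of_ne_zero hn
  have hx' : (d⁄dX R x).order = a := order_derivative_of_order_eq_succ hx
  have hy' : (d⁄dX R y).order = b := order_derivative_of_order_eq_succ hy
  have hne : (d⁄dX R x).order ≠ (d⁄dX R y).order := by
    rw [hx', hy']
    exact_mod_cast fun h ↦ hmn (congrArg Nat.succ h)
  have hsum : a + b = a.succ + b.succ - 3 + 1 := by omega
  apply ENat.add_left_injective_of_ne_top ENat.one_ne_top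
  calc (wronskian (d⁄dX R x) (d⁄dX R y)).order + 1
    _ = ((a + b : ℕ) : ℕ∞) := by rw [order_wronskian_add_one hne, hx', hy', Nat.cast_add]
    _ = (a.succ + b.succ - 3 : ℕ) + 1 := by rw [hsum, Nat.cast_succ]

end CommRing

/-- **Theorem 2.6(2).** For the parametrised curve `γ(t) = (t^m, y(t))` with
`1 ≤ m < n = ord y`, the order of the Wronskian `x'y'' − x''y'` (the number of
inflections concentrated at the singular point) is `m + n − 3`. -/
theorem order_inflection_series (m n : ℕ) (hm : 1 ≤ m) (hmn : m < n)
    (y : PowerSeries ℂ) (hy : y.order = n) :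
    (D ((X : PowerSeries ℂ) ^ m) * D (D y) - D (D ((X : PowerSeries ℂ) ^ m)) * D y).order
      = ((m + n - 3 : ℕ) : ℕ∞) :=
  order_inflection_series_general (by omega) (by omega) hmn.ne (order_X_pow m) hy
end

section
/- Let g, h ∈ R := MvPolynomial ℂ (Fin 2). Then there exists r ∈ R such that i_{g·h} = g³·i_h + h³·i_g + g·h·r. -/
open MvPolynomial

noncomputable section

/-- Partial derivative with respect to the first variable `X`. -/
def dx (f : MvPolynomial (Fin 2) ℂ) : MvPolynomial (Fin 2) ℂ := pderiv 0 f

/-- Partial derivative with respect to the second variable `Y`. -/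
def dy (f : MvPolynomial (Fin 2) ℂ) : MvPolynomial (Fin 2) ℂ := pderiv 1 f

/-- The inflection polynomial `i_f = f_y²·f_xx − 2·f_x·f_y·f_xy + f_x²·f_yy`. -/
def infl (f : MvPolynomial (Fin 2) ℂ) : MvPolynomial (Fin 2) ℂ :=
  (dy f) ^ 2 * dx (dx f) - 2 * dx f * dy f * dy (dx f) + (dx f) ^ 2 * dy (dy f)

/-- The vertex polynomial
`v_f = (f_x² + f_y²)(f_x³ f_yyy − 3 f_x² f_y f_xyy + 3 f_x f_y² f_xxy − f_y³ f_xxx)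
      − 3((f_x² − f_y²) f_xy − f_x f_y (f_xx − f_yy)) · i_f`. -/
def vert (f : MvPolynomial (Fin 2) ℂ) : MvPolynomial (Fin 2) ℂ :=
  ((dx f) ^ 2 + (dy f) ^ 2) *
      ((dx f) ^ 3 * dy (dy (dy f)) - 3 * (dx f) ^ 2 * dy f * dy (dy (dx f)) +
        3 * dx f * (dy f) ^ 2 * dy (dx (dx f)) - (dy f) ^ 3 * dx (dx (dx f))) -
    3 * (((dx f) ^ 2 - (dy f) ^ 2) * dy (dx f) - dx f * dy f * (dx (dx f) - dy (dy f))) *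
      infl f

/-- The canonical map from polynomials to formal power series in two variables. -/
def ι : MvPolynomial (Fin 2) ℂ →+* MvPowerSeries (Fin 2) ℂ :=
  MvPolynomial.coeToMvPowerSeries.ringHom

/-- The local intersection number at the origin of the curves `g = 0` and `h = 0`:
the `ℂ`-dimension of `ℂ⟦x,y⟧/⟨g,h⟩`. -/
def interMult (g h : MvPolynomial (Fin 2) ℂ) : ℕ :=
  Module.finrank ℂ (MvPowerSeries (Fin 2) ℂ ⧸ Ideal.span {ι g, ι h})

end

/-!
Evaluating the Hessian form `H_f` twice on the tangent vector `t_f = (f_y, -f_x)` of the level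
curves of `f` gives `i_f`. By the Leibniz rule the tangent vector of `g * h` is `g • t_h + h • t_g`,
and the Hessian of `g * h` is `g * H_h + h * H_g` plus the symmetrized product of the differentials
of `g` and `h`. In the bilinear expansion of the first two terms, everything but `g³ i_h` and
`h³ i_g` has an evident factor `g * h`. Since `g` is constant along `t_g` and `h` along `t_h`, the
product of the differentials has this factor as well.
-/

section Derivations

variable {R A : Type*} [CommSemiring R] [CommRing A] [Algebra R A] (D E : Derivation R A A)

/-- The inflection element `i_f` of `f`, with arbitrary derivations `D` and `E` in place of
`∂/∂x` and `∂/∂y`; the mixed derivative is taken to be `E (D f)`. -/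
def inflection (f : A) : A :=
  E f ^ 2 * D (D f) - 2 * D f * E f * E (D f) + D f ^ 2 * E (E f)

/-- The Hessian of `f` as a bilinear form on vectors with components along `D` and `E`. It is
symmetric by construction, both mixed entries being `E (D f)`. -/
def hessianForm (f : A) : LinearMap.BilinForm A (A × A) :=
  LinearMap.mk₂ A
    (fun u v => u.1 * v.1 * D (D f) + (u.1 * v.2 + u.2 * v.1) * E (D f) + u.2 * v.2 * E (E f))
    (fun u₁ u₂ v => by simp only [Prod.fst_add, Prod.snd_add]; ring)
    (fun c u v => by simp only [Prod.smul_fst, Prod.smul_snd, smul_eq_mul]; ring)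
    (fun u v₁ v₂ => by simp only [Prod.fst_add, Prod.snd_add]; ring)
    (fun c u v => by simp only [Prod.smul_fst, Prod.smul_snd, smul_eq_mul]; ring)

/-- The derivative in the direction of the vector `u` with components along `D` and `E`. -/
def directionalDerivation (u : A × A) : Derivation R A A :=
  u.1 • D + u.2 • E

/-- The vector `(f_y, -f_x)`, tangent to the level curves of `f`. -/
def levelTangent (f : A) : A × A :=
  (E f, -D f)

theorem hessianForm_apply (f : A) (u v : A × A) :
    hessianForm D E f u v =
      u.1 * v.1 * D (D f) + (u.1 * v.2 + u.2 * v.1) * E (D f) + u.2 * v.2 * E (E f) :=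
  rfl

theorem directionalDerivation_apply (u : A × A) (f : A) :
    directionalDerivation D E u f = u.1 * D f + u.2 * E f :=
  rfl

theorem hessianForm_comm (f : A) (u v : A × A) :
    hessianForm D E f u v = hessianForm D E f v u := by
  simp only [hessianForm_apply]
  ring

theorem inflection_eq_hessianForm (f : A) :
    inflection D E f = hessianForm D E f (levelTangent D E f) (levelTangent D E f) := by
  simp only [inflection, hessianForm_apply, levelTangent]
  ring

theorem levelTangent_mul (g h : A) :
    levelTangent D E (g * h) = g • levelTangent D E h + h • levelTangent D E g := by
  ext <;> simp only [levelTangent, Derivation.leibniz, Prod.smul_mk, Prod.mk_add_mk, smul_eq_mul]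
  ring

theorem hessianForm_mul (g h : A) (u v : A × A) :
    hessianForm D E (g * h) u v =
      g * hessianForm D E h u v + h * hessianForm D E g u v +
        (directionalDerivation D E u g * directionalDerivation D E v h +
          directionalDerivation D E v g * directionalDerivation D E u h) := by
  simp only [hessianForm_apply, directionalDerivation_apply, Derivation.leibniz, map_add,
    smul_eq_mul]
  ring

theorem hessianForm_smul_add_smul_self (f a b : A) (u v : A × A) :
    hessianForm D E f (a • u + b • v) (a • u + b • v) =
      a ^ 2 * hessianForm D E f u u + 2 * a * b * hessianForm D E f u v +
        b ^ 2 * hessianForm D E f v v := by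
  simp only [map_add, map_smul, LinearMap.add_apply, LinearMap.smul_apply, smul_eq_mul,
    hessianForm_comm D E f v u]
  ring

theorem directionalDerivation_smul_add_smul (a b f : A) (u v : A × A) :
    directionalDerivation D E (a • u + b • v) f =
      a * directionalDerivation D E u f + b * directionalDerivation D E v f := by
  simp only [directionalDerivation_apply, Prod.fst_add, Prod.snd_add, Prod.smul_fst,
    Prod.smul_snd, smul_eq_mul]
  ring

theorem directionalDerivation_levelTangent_self (f : A) :
    directionalDerivation D E (levelTangent D E f) f = 0 := by
  simp only [directionalDerivation_apply, levelTangent]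
  ring

theorem directionalDerivation_levelTangent_mul_left (g h : A) :
    directionalDerivation D E (levelTangent D E (g * h)) g =
      g * directionalDerivation D E (levelTangent D E h) g := by
  rw [levelTangent_mul, directionalDerivation_smul_add_smul,
    directionalDerivation_levelTangent_self, mul_zero, add_zero]

theorem directionalDerivation_levelTangent_mul_right (g h : A) :
    directionalDerivation D E (levelTangent D E (g * h)) h =
      h * directionalDerivation D E (levelTangent D E g) h := by
  rw [mul_comm g h, directionalDerivation_levelTangent_mul_left]

theorem infl_mul_general (g h : A) :
    inflection D E (g * h) =
      g ^ 3 * inflection D E h + h ^ 3 * inflection D E g +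
        g * h *
          (g * hessianForm D E g (levelTangent D E h) (levelTangent D E h) +
            h * hessianForm D E h (levelTangent D E g) (levelTangent D E g) +
            2 * h * hessianForm D E g (levelTangent D E h) (levelTangent D E g) +
            2 * g * hessianForm D E h (levelTangent D E h) (levelTangent D E g) +
            2 * directionalDerivation D E (levelTangent D E h) g *
              directionalDerivation D E (levelTangent D E g) h) := by
  rw [inflection_eq_hessianForm, hessianForm_mul, directionalDerivation_levelTangent_mul_left,
    directionalDerivation_levelTangent_mul_right, levelTangent_mul,
    hessianForm_smul_add_smul_self, hessianForm_smul_add_smul_self,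
    inflection_eq_hessianForm, inflection_eq_hessianForm]
  ring

end Derivations

/-- **Key identity of Theorem 3.2(6).** For the inflection polynomial one has
`i_{g·h} = g³·i_h + h³·i_g + g·h·r` for some polynomial `r`. -/
theorem infl_mul (g h : MvPolynomial (Fin 2) ℂ) :
    ∃ r : MvPolynomial (Fin 2) ℂ,
      infl (g * h) = g ^ 3 * infl h + h ^ 3 * infl g + g * h * r :=
  ⟨_, infl_mul_general (R := ℂ) (pderiv 0) (pderiv 1) g h⟩
end

section
/- Let f ∈ R := MvPolynomial ℂ (Fin 2) and let x, y ∈ ℂ⟦T⟧ = PowerSeries ℂ, with φ := MvPolynomial.aeval ![x, y] : R → ℂ⟦T⟧. Assume φ f = 0. Let v⟨x,y⟩ := ((Dx)² + (Dy)²)·((Dx)·(D³y) − (D³x)·(Dy)) + 3·((Dx)·(D²x) + (Dy)·(D²y))·((D²x)·(Dy) − (Dx)·(D²y)). Then ord(φ(v_f)) + 6·ord(Dx) = 6·ord(φ(f_y)) + ord(v⟨x,y⟩) as an equality in ℕ∞. -/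
open MvPolynomial

/-- The vertex series of the parametrised curve `(x, y)`:
`v = (x'² + y'²)(x'y''' − x'''y') + 3(x'x'' + y'y'')(x''y' − x'y'')`. -/
noncomputable def vser (x y : PowerSeries ℂ) : PowerSeries ℂ :=
  ((D x) ^ 2 + (D y) ^ 2) * (D x * D (D (D y)) - D (D (D x)) * D y) +
    3 * (D x * D (D x) + D y * D (D y)) * (D (D x) * D y - D x * D (D y))

/-!
Differentiating `f(x, y) = 0` once gives `f_x x' + f_y y' = 0`, that is,
`x' • (f_y, -f_x) = f_y • (x', y')`. Hence `x' ^ n` times a form of degree `n` evaluated at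
`(f_y, -f_x)` is `f_y ^ n` times its value at `(x', y')`, and `v_f` is built from such forms.
Differentiating twice more expresses the Hessian and the cubic form of `f` at `(x', y')` through
the higher derivatives of `x` and `y`, and the result is
`v_f(x, y) * x' ^ 6 = f_y(x, y) ^ 6 * v_γ`.
This is free of divisions, so it holds in every commutative ring with a derivation; for power
series over a domain it remains to take orders.
-/

section ChainRule

theorem derivation_aeval {σ R A M : Type*} [Fintype σ] [CommSemiring R] [CommSemiring A]
    [Algebra R A] [AddCommMonoid M] [Module R M] [Module A M] (δ : Derivation R A M)
    (γ : σ → A) (f : MvPolynomial σ R) :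
    δ (aeval γ f) = ∑ i, aeval γ (pderiv i f) • δ (γ i) := by
  classical
  induction f using MvPolynomial.induction_on with
  | C a => simp [← MvPolynomial.algebraMap_eq]
  | add p q hp hq => simp only [map_add, hp, hq, add_smul, Finset.sum_add_distrib]
  | mul_X p j hp =>
    simp [hp, Derivation.leibniz, pderiv_X, Pi.single_apply, add_smul, mul_smul,
      Finset.sum_add_distrib, Finset.smul_sum, apply_ite]

theorem pderiv_comm {σ R : Type*} [CommSemiring R] (i j : σ) (f : MvPolynomial σ R) :
    pderiv i (pderiv j f) = pderiv j (pderiv i f) := by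
  classical
  induction f using MvPolynomial.induction_on with
  | C a => simp only [pderiv_C, map_zero]
  | add p q hp hq => simp only [map_add, hp, hq]
  | mul_X p k hp =>
    have pderiv_pderiv_X (l m : σ) : pderiv l (pderiv m (X k : MvPolynomial σ R)) = 0 := by
      rw [pderiv_X, Pi.single_apply]
      split_ifs <;> simp only [pderiv_one, map_zero]
    simp only [pderiv_mul, map_add, pderiv_pderiv_X, hp]
    ring

variable {R A : Type*} [CommSemiring R] [CommSemiring A] [Algebra R A]
  (δ : Derivation R A A) (x y : A) (f : MvPolynomial (Fin 2) R)

theorem derivation_aeval_pair :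
    δ (aeval ![x, y] f) =
      aeval ![x, y] (pderiv 0 f) * δ x + aeval ![x, y] (pderiv 1 f) * δ y := by
  simp [derivation_aeval]

theorem derivation_derivation_aeval_pair :
    δ (δ (aeval ![x, y] f)) =
      aeval ![x, y] (pderiv 0 (pderiv 0 f)) * δ x ^ 2 +
        2 * aeval ![x, y] (pderiv 1 (pderiv 0 f)) * δ x * δ y +
        aeval ![x, y] (pderiv 1 (pderiv 1 f)) * δ y ^ 2 +
        aeval ![x, y] (pderiv 0 f) * δ (δ x) + aeval ![x, y] (pderiv 1 f) * δ (δ y) := by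
  simp only [derivation_aeval_pair, map_add, Derivation.leibniz, smul_eq_mul,
    pderiv_comm (0 : Fin 2) 1]
  ring

theorem derivation_derivation_derivation_aeval_pair :
    δ (δ (δ (aeval ![x, y] f))) =
      aeval ![x, y] (pderiv 0 (pderiv 0 (pderiv 0 f))) * δ x ^ 3 +
        3 * aeval ![x, y] (pderiv 1 (pderiv 0 (pderiv 0 f))) * δ x ^ 2 * δ y +
        3 * aeval ![x, y] (pderiv 1 (pderiv 1 (pderiv 0 f))) * δ x * δ y ^ 2 +
        aeval ![x, y] (pderiv 1 (pderiv 1 (pderiv 1 f))) * δ y ^ 3 +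
        3 * (aeval ![x, y] (pderiv 0 (pderiv 0 f)) * δ x * δ (δ x) +
          aeval ![x, y] (pderiv 1 (pderiv 0 f)) * (δ x * δ (δ y) + δ y * δ (δ x)) +
          aeval ![x, y] (pderiv 1 (pderiv 1 f)) * δ y * δ (δ y)) +
        aeval ![x, y] (pderiv 0 f) * δ (δ (δ x)) + aeval ![x, y] (pderiv 1 f) * δ (δ (δ y)) := by
  simp only [derivation_aeval_pair, map_add, Derivation.leibniz, smul_eq_mul,
    pderiv_comm (0 : Fin 2) 1]
  ring

end ChainRule

section TangentVector

variable {A : Type*} [CommRing A] {fx fy u v : A}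

theorem sq_mul_sq_add_sq_of_tangent (tangent : fx * u + fy * v = 0) :
    u ^ 2 * (fx ^ 2 + fy ^ 2) = fy ^ 2 * (u ^ 2 + v ^ 2) := by
  linear_combination (fx * u - fy * v) * tangent

theorem sq_mul_quadratic_of_tangent (tangent : fx * u + fy * v = 0) (fxx fxy fyy : A) :
    u ^ 2 * (fy ^ 2 * fxx - 2 * fx * fy * fxy + fx ^ 2 * fyy) =
      fy ^ 2 * (fxx * u ^ 2 + 2 * fxy * u * v + fyy * v ^ 2) := by
  linear_combination (fyy * (fx * u - fy * v) - 2 * u * fy * fxy) * tangent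

theorem sq_mul_normalPolar_of_tangent (tangent : fx * u + fy * v = 0) (fxx fxy fyy : A) :
    u ^ 2 * ((fx ^ 2 - fy ^ 2) * fxy - fx * fy * (fxx - fyy)) =
      fy ^ 2 * ((v ^ 2 - u ^ 2) * fxy + u * v * (fxx - fyy)) := by
  linear_combination (fxy * (fx * u - fy * v) - u * fy * (fxx - fyy)) * tangent

theorem cube_mul_cubic_of_tangent (tangent : fx * u + fy * v = 0) (fxxx fxxy fxyy fyyy : A) :
    u ^ 3 * (fx ^ 3 * fyyy - 3 * fx ^ 2 * fy * fxyy + 3 * fx * fy ^ 2 * fxxy - fy ^ 3 * fxxx) =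
      -(fy ^ 3 * (fxxx * u ^ 3 + 3 * fxxy * u ^ 2 * v + 3 * fxyy * u * v ^ 2 + fyyy * v ^ 3)) := by
  linear_combination (fyyy * (fx ^ 2 * u ^ 2 - fx * u * fy * v + fy ^ 2 * v ^ 2) -
    3 * fxyy * u * fy * (fx * u - fy * v) + 3 * fxxy * fy ^ 2 * u ^ 2) * tangent

theorem vertex_mul_pow_six_of_tangent (tangent : fx * u + fy * v = 0)
    (fxx fxy fyy fxxx fxxy fxyy fyyy : A) :
    ((fx ^ 2 + fy ^ 2) *
          (fx ^ 3 * fyyy - 3 * fx ^ 2 * fy * fxyy + 3 * fx * fy ^ 2 * fxxy - fy ^ 3 * fxxx) -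
        3 * ((fx ^ 2 - fy ^ 2) * fxy - fx * fy * (fxx - fyy)) *
          (fy ^ 2 * fxx - 2 * fx * fy * fxy + fx ^ 2 * fyy)) * u ^ 6 =
      -(fy ^ 5 * u * (u ^ 2 + v ^ 2) *
          (fxxx * u ^ 3 + 3 * fxxy * u ^ 2 * v + 3 * fxyy * u * v ^ 2 + fyyy * v ^ 3)) -
        3 * fy ^ 4 * u ^ 2 * ((v ^ 2 - u ^ 2) * fxy + u * v * (fxx - fyy)) *
          (fxx * u ^ 2 + 2 * fxy * u * v + fyy * v ^ 2) := by
  have regroup (n c j q : A) :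
      (n * c - 3 * j * q) * u ^ 6 =
        u * (u ^ 2 * n) * (u ^ 3 * c) - 3 * u ^ 2 * (u ^ 2 * j) * (u ^ 2 * q) := by
    ring
  rw [regroup, sq_mul_sq_add_sq_of_tangent tangent, cube_mul_cubic_of_tangent tangent,
    sq_mul_normalPolar_of_tangent tangent, sq_mul_quadratic_of_tangent tangent]
  ring

theorem vertex_mul_pow_six_of_contact {fxx fxy fyy fxxx fxxy fxyy fyyy u₁ v₁ u₂ v₂ : A}
    (contact₁ : fx * u + fy * v = 0)
    (contact₂ : fxx * u ^ 2 + 2 * fxy * u * v + fyy * v ^ 2 + fx * u₁ + fy * v₁ = 0)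
    (contact₃ : fxxx * u ^ 3 + 3 * fxxy * u ^ 2 * v + 3 * fxyy * u * v ^ 2 + fyyy * v ^ 3 +
      3 * (fxx * u * u₁ + fxy * (u * v₁ + v * u₁) + fyy * v * v₁) + fx * u₂ + fy * v₂ = 0) :
    ((fx ^ 2 + fy ^ 2) *
          (fx ^ 3 * fyyy - 3 * fx ^ 2 * fy * fxyy + 3 * fx * fy ^ 2 * fxxy - fy ^ 3 * fxxx) -
        3 * ((fx ^ 2 - fy ^ 2) * fxy - fx * fy * (fxx - fyy)) *
          (fy ^ 2 * fxx - 2 * fx * fy * fxy + fx ^ 2 * fyy)) * u ^ 6 =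
      fy ^ 6 * ((u ^ 2 + v ^ 2) * (u * v₂ - u₂ * v) +
        3 * (u * u₁ + v * v₁) * (u₁ * v - u * v₁)) := by
  rw [vertex_mul_pow_six_of_tangent contact₁]
  set quadratic := fxx * u ^ 2 + 2 * fxy * u * v + fyy * v ^ 2 with quadratic_def
  set cubic := fxxx * u ^ 3 + 3 * fxxy * u ^ 2 * v + 3 * fxyy * u * v ^ 2 + fyyy * v ^ 3
  set polar := fxx * u * u₁ + fxy * (u * v₁ + v * u₁) + fyy * v * v₁ with polar_def
  set normalPolar := (v ^ 2 - u ^ 2) * fxy + u * v * (fxx - fyy) with normalPolar_def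
  have mul_quadratic : u * quadratic = fy * (u₁ * v - u * v₁) := by
    linear_combination u * contact₂ - u₁ * contact₁
  have mul_cubic : u * cubic = fy * (u₂ * v - u * v₂) - 3 * u * polar := by
    linear_combination u * contact₃ - u₂ * contact₁
  -- Expands `(u₁, v₁)` in the orthogonal basis `(u, v)`, `(v, -u)`, scaled by `u ^ 2 + v ^ 2`.
  have polar_decomposition : (u ^ 2 + v ^ 2) * polar =
      (u * u₁ + v * v₁) * quadratic + (u₁ * v - u * v₁) * normalPolar := by
    rw [quadratic_def, polar_def, normalPolar_def]
    ring
  linear_combination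
    (3 * fy ^ 5 * (u * u₁ + v * v₁) - 3 * fy ^ 4 * u * normalPolar) * mul_quadratic -
    fy ^ 5 * (u ^ 2 + v ^ 2) * mul_cubic + 3 * fy ^ 5 * u * polar_decomposition

end TangentVector

section Vertex

variable {R : Type*} [CommRing R]

/-- The inflection polynomial `i_f` over an arbitrary coefficient ring; over `ℂ` it is `infl f`. -/
noncomputable def inflectionPolynomial (f : MvPolynomial (Fin 2) R) : MvPolynomial (Fin 2) R :=
  pderiv 1 f ^ 2 * pderiv 0 (pderiv 0 f) - 2 * pderiv 0 f * pderiv 1 f * pderiv 1 (pderiv 0 f) +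
    pderiv 0 f ^ 2 * pderiv 1 (pderiv 1 f)

/-- The vertex polynomial `v_f` over an arbitrary coefficient ring; over `ℂ` it is `vert f`. -/
noncomputable def vertexPolynomial (f : MvPolynomial (Fin 2) R) : MvPolynomial (Fin 2) R :=
  (pderiv 0 f ^ 2 + pderiv 1 f ^ 2) *
      (pderiv 0 f ^ 3 * pderiv 1 (pderiv 1 (pderiv 1 f)) -
        3 * pderiv 0 f ^ 2 * pderiv 1 f * pderiv 1 (pderiv 1 (pderiv 0 f)) +
        3 * pderiv 0 f * pderiv 1 f ^ 2 * pderiv 1 (pderiv 0 (pderiv 0 f)) -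
        pderiv 1 f ^ 3 * pderiv 0 (pderiv 0 (pderiv 0 f))) -
    3 * ((pderiv 0 f ^ 2 - pderiv 1 f ^ 2) * pderiv 1 (pderiv 0 f) -
        pderiv 0 f * pderiv 1 f * (pderiv 0 (pderiv 0 f) - pderiv 1 (pderiv 1 f))) *
      inflectionPolynomial f

variable {A : Type*} [CommRing A] [Algebra R A]

/-- The vertex expression `v_γ` of a parametrised curve `γ = (x, y)` with coordinates in an
algebra `A`, where the derivation `δ` of `A` plays the role of differentiation in the parameter;
for the formal derivative on `ℂ⟦T⟧` it is `vser x y`. -/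
def vertexForm (δ : Derivation R A A) (x y : A) : A :=
  (δ x ^ 2 + δ y ^ 2) * (δ x * δ (δ (δ y)) - δ (δ (δ x)) * δ y) +
    3 * (δ x * δ (δ x) + δ y * δ (δ y)) * (δ (δ x) * δ y - δ x * δ (δ y))

theorem aeval_vertexPolynomial_mul_pow_six (δ : Derivation R A A) {f : MvPolynomial (Fin 2) R}
    {x y : A} (hf : aeval ![x, y] f = 0) :
    aeval ![x, y] (vertexPolynomial f) * δ x ^ 6 =
      aeval ![x, y] (pderiv 1 f) ^ 6 * vertexForm δ x y := by
  have contact₁ := derivation_aeval_pair δ x y f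
  have contact₂ := derivation_derivation_aeval_pair δ x y f
  have contact₃ := derivation_derivation_derivation_aeval_pair δ x y f
  simp only [hf, map_zero] at contact₁ contact₂ contact₃
  simp only [vertexPolynomial, inflectionPolynomial, map_sub, map_add, map_mul, map_pow, map_ofNat]
  exact vertex_mul_pow_six_of_contact contact₁.symm contact₂.symm contact₃.symm

theorem vertex_pullback_order_identity_general [IsDomain R]
    (f : MvPolynomial (Fin 2) R) (x y : PowerSeries R) (hf : aeval ![x, y] f = 0) :
    (aeval ![x, y] (vertexPolynomial f)).order + 6 * (PowerSeries.derivative R x).order =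
      6 * (aeval ![x, y] (pderiv 1 f)).order +
        (vertexForm (PowerSeries.derivative R) x y).order := by
  have order_eq := congrArg PowerSeries.order
    (aeval_vertexPolynomial_mul_pow_six (PowerSeries.derivative R) hf)
  simpa [PowerSeries.order_mul, PowerSeries.order_pow] using order_eq

end Vertex

/-- **Key identity in Theorem 3.8(2).** If `γ = (x, y)` parametrises a branch of the
curve `f = 0` (i.e. `f(x(t), y(t)) = 0`), then
`ord(v_f ∘ γ) + 6·ord(x') = 6·ord(f_y ∘ γ) + ord(v_γ)`. -/
theorem vertex_pullback_order_identity
    (f : MvPolynomial (Fin 2) ℂ) (x y : PowerSeries ℂ)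
    (hf : MvPolynomial.aeval ![x, y] f = 0) :
    (MvPolynomial.aeval ![x, y] (vert f)).order + 6 * (D x).order
      = 6 * (MvPolynomial.aeval ![x, y] (dy f)).order + (vser x y).order :=
  vertex_pullback_order_identity_general f x y hf
end
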